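/- Let n be a positive integer and let B be a 2-basic set of the symmetric group S_n which contains every irreducible complex character χ of S_n satisfying ε⊗χ = χ, where ε is the sign character. Then the restriction B_{A_n} of B to the alternating group A_n, namely the set of all irreducible constituents of the restrictions to A_n of the characters in B, is a 2-basic set of A_n. -/

import Mathlib

open scoped Classical

/-- `f : G → ℂ` is an irreducible complex character of `G`. -/
def IsIrrChar (G : Type) [Group G] (f : G → ℂ) : Prop :=
  ∃ V : FDRep ℂ G, CategoryTheory.Simple V ∧ FDRep.character V = f

/-- Restriction of a function to 2-regular (odd order) elements, extended by zero. -/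
noncomputable def twoReg {G : Type*} [Monoid G] (f : G → ℂ) : G → ℂ :=
  fun g => if Odd (orderOf g) then f g else 0

/-- `B` is a 2-basic set of `G`: the restrictions to 2-regular elements of the members of `B`
are `ℤ`-linearly independent and span the same `ℤ`-module as the restrictions to 2-regular
elements of all irreducible characters. -/
def IsTwoBasicSet (G : Type) [Group G] (B : Set (G → ℂ)) : Prop :=
  B ⊆ {f | IsIrrChar G f} ∧
  LinearIndependent ℤ (fun f : B => twoReg (f : G → ℂ)) ∧
  Submodule.span ℤ (twoReg '' B) = Submodule.span ℤ (twoReg '' {f | IsIrrChar G f})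

/-- The restriction of `B ⊆ Irr(S_n)` to the alternating group: the set of irreducible
characters of A_n occurring as a constituent of the restriction to A_n of some member of B. -/
noncomputable def restrictionToAlternating (n : ℕ) (B : Set (Equiv.Perm (Fin n) → ℂ)) :
    Set (alternatingGroup (Fin n) → ℂ) :=
  {θ | IsIrrChar (alternatingGroup (Fin n)) θ ∧
    ∃ f ∈ B, (∑ a : alternatingGroup (Fin n), f a * (starRingEnd ℂ) (θ a)) ≠ 0}

/-!
Let `H` be the kernel of `ε : G →* ℤˣ`, of index two. By Clifford theory an irreducible character
`f` of `G` restricts to `H` either as an irreducible character or as `ψ + ψ ^ y` with `y ∉ H`, and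
the first case occurs whenever `ε * f ≠ f`.

Independence: let `φ` be a `ℤ`-combination of constituents of `B` which vanishes on the 2-regular
elements of `H`. In the symmetric group, a permutation of even order commutes with one of its
cycles of even length, hence with an odd element; so the 2-singular classes of `H` are stable under
`y`, and `φ ^ y = φ`. By Clifford theory `2 φ = φ + φ ^ y` is then the restriction of an integral
combination `F` of `B`. As `F` vanishes on all 2-regular elements (they lie in `H`), `F = 0`.

Spanning: an irreducible character `θ` of `H` lies below some `f`. If `ε * f = f`, then `f ∈ B` and
`θ` is a constituent of `B`; otherwise `θ` is the restriction of `f`, which on 2-regular elements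
is an integral combination of `B`.
-/

open CategoryTheory Matrix

section Characters

open scoped ComplexOrder

lemma dotProduct_star_comp_val_lt {α : Type*} [Fintype α] {p : α → Prop} [Fintype {a // p a}]
    {f : α → ℂ} {x : α} (hx : ¬ p x) (hfx : f x ≠ 0) :
    (f ∘ (↑) : {a // p a} → ℂ) ⬝ᵥ star (f ∘ (↑)) < f ⬝ᵥ star f := by
  calc (f ∘ (↑) : {a // p a} → ℂ) ⬝ᵥ star (f ∘ (↑))
      = ∑ a ∈ Finset.univ.map (Function.Embedding.subtype p), f a * star (f a) := by
        rw [Finset.sum_map]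
        rfl
    _ < ∑ a, f a * star (f a) :=
        Finset.sum_lt_sum_of_subset (Finset.subset_univ _) (Finset.mem_univ x) (by simpa using hx)
          ((mul_star_self_nonneg _).lt_of_ne' (by simpa)) fun a _ _ => mul_star_self_nonneg _

variable {G : Type*} [Group G] [Finite G]

lemma exists_posDef_conjTranspose_mul_mul_eq {m : Type*} [Fintype m] [DecidableEq m]
    (M : G →* Matrix m m ℂ) :
    ∃ P : Matrix m m ℂ, P.PosDef ∧ ∀ g, (M g)ᴴ * P * M g = P := by
  have := Fintype.ofFinite G
  refine ⟨∑ x, (M x)ᴴ * M x, ?_, fun g => ?_⟩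
  · rw [← Finset.add_sum_erase _ _ (Finset.mem_univ 1), map_one, mul_one, conjTranspose_one]
    exact PosDef.one.add_posSemidef
      (posSemidef_sum _ fun x _ => posSemidef_conjTranspose_mul_self _)
  · simp only [Finset.mul_sum, Finset.sum_mul]
    exact Fintype.sum_equiv (Equiv.mulRight g) _ _ fun x => by simp [Matrix.mul_assoc]

lemma trace_map_inv_eq_star {m : Type*} [Fintype m] [DecidableEq m] (M : G →* Matrix m m ℂ)
    (g : G) : (M g⁻¹).trace = star (M g).trace := by
  obtain ⟨P, hP, hinv⟩ := exists_posDef_conjTranspose_mul_mul_eq M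
  have hdet : IsUnit P.det := (isUnit_iff_isUnit_det P).1 hP.isUnit
  have hPg : P * M g⁻¹ = (M g)ᴴ * P := by
    conv_lhs => rw [← hinv g]
    rw [Matrix.mul_assoc, ← map_mul, mul_inv_cancel, map_one, mul_one]
  calc (M g⁻¹).trace = (P⁻¹ * (P * M g⁻¹)).trace := by rw [nonsing_inv_mul_cancel_left _ _ hdet]
    _ = star (M g).trace := by
      rw [hPg, trace_mul_comm, mul_nonsing_inv_cancel_right _ _ hdet, trace_conjTranspose]

variable {V W : Type*} [AddCommGroup V] [Module ℂ V] [FiniteDimensional ℂ V]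
  [AddCommGroup W] [Module ℂ W] [FiniteDimensional ℂ W]

lemma character_inv_eq_star (ρ : Representation ℂ G V) (g : G) :
    ρ.character g⁻¹ = star (ρ.character g) := by
  let b := Module.finBasis ℂ V
  simp only [Representation.character, LinearMap.trace_eq_matrix_trace ℂ b]
  exact trace_map_inv_eq_star ((LinearMap.toMatrixAlgEquiv b).toMonoidHom.comp ρ) g

lemma dotProduct_star_character [Fintype G] (ρ : Representation ℂ G V)
    (σ : Representation ℂ G W) :
    σ.character ⬝ᵥ star ρ.character =
      Nat.card G * Module.finrank ℂ (Representation.IntertwiningMap ρ σ) := by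
  have : Invertible (Nat.card G : ℂ) := invertibleOfNonzero (by simp)
  rw [← Representation.card_inv_mul_sum_char_mul_char_eq_finrank, mul_inv_cancel_left₀ (by simp)]
  simp_rw [character_inv_eq_star]
  rfl

lemma character_dotProduct_star_ne_zero [Fintype G] {ρ : Representation ℂ G V}
    {σ : Representation ℂ G W} {φ : Representation.IntertwiningMap ρ σ} (hφ : φ ≠ 0) :
    ρ.character ⬝ᵥ star σ.character ≠ 0 := by
  have := nontrivial_of_ne φ 0 hφ
  rw [dotProduct_star, star_ne_zero, dotProduct_star_character]
  simp [Module.finrank_pos.ne']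

lemma isIrreducible_of_simple {k G : Type} [Field k] [Group G] (V : FDRep k G) [Simple V] :
    Representation.IsIrreducible (V := V) V.ρ := by
  have hbot_ne_top : (⊥ : Subrepresentation (W := V) V.ρ) ≠ ⊤ := fun h =>
    Simple.not_isZero V <| (Limits.IsZero.iff_id_eq_zero V).2 <| by
      ext v
      have hsub : (⊥ : Submodule k V) = ⊤ := congrArg Subrepresentation.toSubmodule h
      exact (Submodule.mem_bot k).1 (hsub ▸ Submodule.mem_top)
  have : Nontrivial (Subrepresentation (W := V) V.ρ) := ⟨⊥, ⊤, hbot_ne_top⟩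
  refine ⟨fun N => or_iff_not_imp_left.2 fun hN => ?_⟩
  let i : FDRep.of N.toRepresentation ⟶ V :=
    FDRep.forget₂HomLinearEquiv (FDRep.of N.toRepresentation) V
      (Rep.ofHom ⟨N.toSubmodule.subtype, fun g => rfl⟩)
  have hi : Mono i := (forget₂ (FDRep k G) (Rep k G)).mono_of_mono_map <|
    (Rep.mono_iff_injective _).2 N.toSubmodule.injective_subtype
  have hi_ne_zero : i ≠ 0 := by
    intro h
    apply hN
    apply Subrepresentation.toSubmodule_injective
    refine (Submodule.eq_bot_iff _).2 fun v hv => ?_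
    exact congrArg (fun j : FDRep.of N.toRepresentation ⟶ V => j.hom ⟨v, hv⟩) h
  have := isIso_of_mono_of_nonzero hi_ne_zero
  apply Subrepresentation.toSubmodule_injective
  refine Submodule.eq_top_iff'.2 fun v => ?_
  obtain ⟨w, hw⟩ := (FDRep.isoToLinearEquiv (asIso i)).surjective v
  rw [← hw]
  exact w.2

lemma simple_of_isIrreducible {k G : Type} [Field k] [IsAlgClosed k] [CharZero k] [Group G]
    [Finite G] {V : Type} [AddCommGroup V] [Module k V] [FiniteDimensional k V]
    (ρ : Representation k G V) [ρ.IsIrreducible] : Simple (FDRep.of ρ) := by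
  have := Fintype.ofFinite G
  have := invertibleOfNonzero (NeZero.ne (Nat.card G : k))
  have h := ρ.card_inv_mul_sum_char_mul_char_eq_finrank ρ
  rw [Representation.IsIrreducible.finrank_intertwiningMap_self, Nat.cast_one,
    inv_mul_eq_one₀ (NeZero.ne _)] at h
  exact (FDRep.simple_iff_char_is_norm_one _).2 h.symm

end Characters

section IrreducibleCharacters

open scoped ComplexOrder

variable {G : Type} [Group G] {f h : G → ℂ}

lemma IsIrrChar.apply_conj (hf : IsIrrChar G f) (x g : G) : f (x * g * x⁻¹) = f g := by
  obtain ⟨V, -, rfl⟩ := hf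
  exact V.char_conj g x

lemma IsIrrChar.exists_isIrreducible (hf : IsIrrChar G f) :
    ∃ (V : Type) (_ : AddCommGroup V) (_ : Module ℂ V) (_ : FiniteDimensional ℂ V)
      (ρ : Representation ℂ G V), ρ.IsIrreducible ∧ ρ.character = f := by
  obtain ⟨V, _, rfl⟩ := hf
  exact ⟨V, inferInstance, inferInstance, inferInstance, V.ρ, isIrreducible_of_simple V, rfl⟩

variable [Finite G]

lemma isIrrChar_character {V : Type} [AddCommGroup V] [Module ℂ V] [FiniteDimensional ℂ V]
    (ρ : Representation ℂ G V) [ρ.IsIrreducible] : IsIrrChar G ρ.character :=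
  ⟨FDRep.of ρ, simple_of_isIrreducible ρ, rfl⟩

lemma IsIrrChar.dotProduct_star_self [Fintype G] (hf : IsIrrChar G f) :
    f ⬝ᵥ star f = Nat.card G := by
  obtain ⟨V, _, _, _, ρ, _, rfl⟩ := hf.exists_isIrreducible
  rw [dotProduct_star_character, Representation.IsIrreducible.finrank_intertwiningMap_self,
    Nat.cast_one, mul_one]

lemma IsIrrChar.dotProduct_star_eq_zero [Fintype G] (hf : IsIrrChar G f) (hh : IsIrrChar G h)
    (hne : f ≠ h) : f ⬝ᵥ star h = 0 := by
  obtain ⟨V, _, _, _, ρ, _, rfl⟩ := hf.exists_isIrreducible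
  obtain ⟨W, _, _, _, σ, _, rfl⟩ := hh.exists_isIrreducible
  have : IsEmpty (σ.Equiv ρ) := ⟨fun e => hne (Representation.char_iso e).symm⟩
  rw [dotProduct_star_character, Module.finrank_zero_of_subsingleton, Nat.cast_zero, mul_zero]

lemma IsIrrChar.dotProduct_star_nonneg [Fintype G] (hf : IsIrrChar G f) (hh : IsIrrChar G h) :
    0 ≤ f ⬝ᵥ star h := by
  obtain ⟨V, _, _, _, ρ, _, rfl⟩ := hf.exists_isIrreducible
  obtain ⟨W, _, _, _, σ, _, rfl⟩ := hh.exists_isIrreducible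
  rw [dotProduct_star_character]
  positivity

lemma IsIrrChar.dotProduct_star_add_pos [Fintype G]
    (hf : IsIrrChar G f) (hh : IsIrrChar G h) : 0 < (f + h) ⬝ᵥ star f := by
  rw [add_dotProduct, hf.dotProduct_star_self]
  exact add_pos_of_pos_of_nonneg (by simp [Fintype.card_pos]) (hh.dotProduct_star_nonneg hf)

lemma IsIrrChar.two_mul_card_le_dotProduct_star_add [Fintype G]
    (hf : IsIrrChar G f) (hh : IsIrrChar G h) :
    (2 * Nat.card G : ℂ) ≤ (f + h) ⬝ᵥ star (f + h) := by
  rw [star_add, dotProduct_add, add_dotProduct, add_dotProduct, hf.dotProduct_star_self,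
    hh.dotProduct_star_self, two_mul]
  exact add_le_add (le_add_of_nonneg_right (hh.dotProduct_star_nonneg hf))
    (le_add_of_nonneg_left (hf.dotProduct_star_nonneg hh))

variable (G) in
lemma linearIndependent_isIrrChar :
    LinearIndepOn ℂ id {f : G → ℂ | IsIrrChar G f} := by
  have := Fintype.ofFinite G
  refine linearIndependent_iff'.2 fun s c hsum θ hθ => ?_
  have hpair := congrArg (· ⬝ᵥ star θ.1) hsum
  simp only [sum_dotProduct, smul_dotProduct, zero_dotProduct, id_eq] at hpair
  rw [Finset.sum_eq_single_of_mem θ hθ fun φ _ hne => by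
    rw [φ.2.dotProduct_star_eq_zero θ.2 (Subtype.coe_ne_coe.2 hne), smul_zero]] at hpair
  rw [θ.2.dotProduct_star_self] at hpair
  simpa using hpair

end IrreducibleCharacters

section Subrepresentations

variable {k G V : Type*} [Field k] [AddCommGroup V] [Module k V]

lemma exists_isAtom_subrepresentation [Monoid G] [FiniteDimensional k V] [Nontrivial V]
    (ρ : Representation k G V) : ∃ N : Subrepresentation ρ, IsAtom N := by
  have hmono : StrictMono (Subrepresentation.toSubmodule (ρ := ρ)) := fun _ _ h => h
  have := hmono.wellFoundedLT
  have htop : (⊤ : Subrepresentation ρ) ≠ ⊥ := fun h =>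
    top_ne_bot (α := Submodule k V) (congrArg Subrepresentation.toSubmodule h)
  obtain ⟨N, hN, -⟩ := (eq_bot_or_exists_atom_le (⊤ : Subrepresentation ρ)).resolve_left htop
  exact ⟨N, hN⟩

lemma isIrreducible_toRepresentation_of_isAtom [Monoid G] {ρ : Representation k G V}
    {N : Subrepresentation ρ} (hN : IsAtom N) : N.toRepresentation.IsIrreducible := by
  let image (M : Subrepresentation N.toRepresentation) : Subrepresentation ρ :=
    ⟨M.toSubmodule.map N.toSubmodule.subtype, by
      rintro g _ ⟨v, hv, rfl⟩
      exact ⟨_, M.apply_mem_toSubmodule g hv, rfl⟩⟩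
  have hbot_ne_top : (⊥ : Subrepresentation N.toRepresentation) ≠ ⊤ := fun h => hN.1 <| by
    refine Subrepresentation.toSubmodule_injective ?_
    exact Submodule.subsingleton_iff_eq_bot.1
      ((Submodule.subsingleton_iff k).1
        (subsingleton_of_bot_eq_top (congrArg Subrepresentation.toSubmodule h)))
  have : Nontrivial (Subrepresentation N.toRepresentation) := ⟨⊥, ⊤, hbot_ne_top⟩
  refine ⟨fun M => ?_⟩
  have hle : image M ≤ N := Submodule.map_subtype_le _ _
  refine (hN.le_iff.1 hle).imp (fun h => ?_) fun h => ?_ <;>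
    refine Subrepresentation.toSubmodule_injective
      (Submodule.map_injective_of_injective N.toSubmodule.injective_subtype ?_)
  · exact (congrArg Subrepresentation.toSubmodule h).trans (Submodule.map_bot _).symm
  · exact (congrArg Subrepresentation.toSubmodule h).trans (Submodule.map_subtype_top _).symm

lemma nontrivial_of_isIrreducible [Monoid G] (ρ : Representation k G V) [h : ρ.IsIrreducible] :
    Nontrivial V := by
  by_contra hV
  rw [not_nontrivial_iff_subsingleton] at hV
  exact bot_ne_top (α := Subrepresentation ρ)
    (Subrepresentation.toSubmodule_injective (Subsingleton.elim _ _))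

lemma isIrreducible_comp_of_surjective {K : Type*} [Monoid G] [Monoid K]
    (ρ : Representation k G V) [ρ.IsIrreducible] {φ : K →* G} (hφ : Function.Surjective φ) :
    Representation.IsIrreducible (ρ.comp φ) :=
  OrderIso.isSimpleOrder (β := Subrepresentation ρ)
    { toFun := fun N => ⟨N.toSubmodule, hφ.forall.2 N.apply_mem_toSubmodule⟩
      invFun := fun N => ⟨N.toSubmodule, fun g => N.apply_mem_toSubmodule (φ g)⟩
      left_inv := fun _ => rfl
      right_inv := fun _ => rfl
      map_rel_iff' := Iff.rfl }

lemma character_eq_add_of_isCompl [Monoid G] [FiniteDimensional k V] {ρ : Representation k G V}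
    {N N' : Subrepresentation ρ} (h : IsCompl N.toSubmodule N'.toSubmodule) :
    ρ.character = N.toRepresentation.character + N'.toRepresentation.character := by
  ext g
  rw [Pi.add_apply, Representation.character, Representation.character,
    Representation.character, ← LinearMap.trace_prodMap',
    ← LinearMap.trace_conj' _ (Submodule.prodEquivOfIsCompl _ _ h)]
  congr 1
  refine LinearMap.ext fun v => ?_
  obtain ⟨w, rfl⟩ := (Submodule.prodEquivOfIsCompl _ _ h).surjective v
  rw [LinearEquiv.conj_apply_apply, LinearEquiv.symm_apply_apply,
    Submodule.coe_prodEquivOfIsCompl', Submodule.coe_prodEquivOfIsCompl', map_add]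
  rfl

lemma character_toRepresentation_of_eq_top [Monoid G] {ρ : Representation k G V}
    {N : Subrepresentation ρ} (h : N.toSubmodule = ⊤) :
    N.toRepresentation.character = ρ.character :=
  Representation.char_iso (.mk (LinearEquiv.ofTop _ h) fun _ => rfl)

variable [Group G] {H : Subgroup G} [H.Normal] {ρ : Representation k G V}

/-- The translate `ρ x N` of an `H`-subrepresentation `N`, for `H` normal in `G` and `x : G`. -/
def translateSubrepresentation (x : G) (N : Subrepresentation (ρ.comp H.subtype)) :
    Subrepresentation (ρ.comp H.subtype) where
  toSubmodule := N.toSubmodule.map (ρ x)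
  apply_mem_toSubmodule := by
    rintro g _ ⟨v, hv, rfl⟩
    refine ⟨_, N.apply_mem_toSubmodule (MulAut.conjNormal x⁻¹ g) hv, ?_⟩
    simp [← Module.End.mul_apply, ← map_mul, mul_assoc]

lemma character_translateSubrepresentation (x : G)
    (N : Subrepresentation (ρ.comp H.subtype)) :
    (translateSubrepresentation x N).toRepresentation.character =
      N.toRepresentation.character ∘ MulAut.conjNormal x⁻¹ := by
  let e : N.toSubmodule ≃ₗ[k] (translateSubrepresentation x N).toSubmodule :=
    Submodule.equivMapOfInjective (ρ x) (ρ.apply_bijective x).injective N.toSubmodule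
  let σ : Representation k H N.toSubmodule :=
    N.toRepresentation.comp (MulAut.conjNormal x⁻¹ : H ≃* H).toMonoidHom
  have he (g : H) : e ∘ₗ σ g = (translateSubrepresentation x N).toRepresentation g ∘ₗ e := by
    ext v
    change ρ x (ρ (MulAut.conjNormal x⁻¹ g) v) = ρ g (ρ x v)
    simp [← Module.End.mul_apply, ← map_mul, mul_assoc]
  exact (Representation.char_iso (Representation.Equiv.mk e he)).symm

lemma sup_translateSubrepresentation_eq_top [ρ.IsIrreducible] (hH : H.index = 2) {x : G}
    (hx : x ∉ H) {N : Subrepresentation (ρ.comp H.subtype)} (hN : N ≠ ⊥) :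
    N.toSubmodule ⊔ (translateSubrepresentation x N).toSubmodule = ⊤ := by
  let S := N ⊔ translateSubrepresentation x N
  have hxN {v : V} (hv : v ∈ N) : ρ x v ∈ S :=
    Submodule.mem_sup_right (Submodule.mem_map_of_mem hv)
  have hxxN {v : V} (hv : v ∈ N) : ρ x (ρ x v) ∈ S := by
    have hxx : x * x ∈ H := by simp [Subgroup.mul_mem_iff_of_index_two hH]
    rw [← Module.End.mul_apply, ← map_mul]
    exact Submodule.mem_sup_left (N.apply_mem_toSubmodule ⟨x * x, hxx⟩ hv)
  have hxS {v : V} (hv : v ∈ S) : ρ x v ∈ S := by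
    obtain ⟨u, hu, _, ⟨w, hw, rfl⟩, rfl⟩ := Submodule.mem_sup.1 hv
    rw [map_add]
    exact S.toSubmodule.add_mem (hxN hu) (hxxN hw)
  let S' : Subrepresentation ρ := ⟨S.toSubmodule, fun g v hv => by
    by_cases hg : g ∈ H
    · exact S.apply_mem_toSubmodule ⟨g, hg⟩ hv
    · have hgx : g * x⁻¹ ∈ H := by simp [Subgroup.mul_mem_iff_of_index_two hH, hg, hx]
      rw [← inv_mul_cancel_right g x, map_mul, Module.End.mul_apply]
      exact S.apply_mem_toSubmodule ⟨g * x⁻¹, hgx⟩ (hxS hv)⟩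
  have hS' : S' ≠ ⊥ := fun h => by
    have hS : S.toSubmodule = ⊥ := congrArg Subrepresentation.toSubmodule h
    exact hN (Subrepresentation.toSubmodule_injective (le_bot_iff.1 (le_sup_left.trans_eq hS)))
  exact congrArg Subrepresentation.toSubmodule ((eq_bot_or_eq_top S').resolve_left hS')

end Subrepresentations

section Clifford

open scoped ComplexOrder

lemma IsIrrChar.comp_mulEquiv {K L : Type} [Group K] [Group L] [Finite K] {θ : L → ℂ}
    (hθ : IsIrrChar L θ) (e : K ≃* L) : IsIrrChar K (θ ∘ e) := by
  obtain ⟨V, _, _, _, ρ, _, rfl⟩ := hθ.exists_isIrreducible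
  have := isIrreducible_comp_of_surjective ρ (φ := e.toMonoidHom) e.surjective
  exact isIrrChar_character (ρ.comp e.toMonoidHom)

variable {G : Type} [Group G] {H : Subgroup G} [H.Normal]

lemma IsIrrChar.comp_conjNormal_of_mem {θ : H → ℂ} (hθ : IsIrrChar H θ) {x : G}
    (hx : x ∈ H) : θ ∘ MulAut.conjNormal x = θ :=
  funext fun a => hθ.apply_conj ⟨x, hx⟩ a

lemma comp_conjNormal_mul (θ : H → ℂ) (x y : G) :
    θ ∘ MulAut.conjNormal (x * y) = (θ ∘ MulAut.conjNormal x) ∘ MulAut.conjNormal y := by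
  rw [map_mul]
  rfl

lemma IsIrrChar.exists_restrict_eq_or_eq_add [Finite G] (hH : H.index = 2) {f : G → ℂ}
    (hf : IsIrrChar G f) {y : G} (hy : y ∉ H) :
    ∃ ψ, IsIrrChar H ψ ∧
      (f ∘ (↑) = ψ ∨ f ∘ (↑) = ψ + ψ ∘ MulAut.conjNormal y) := by
  obtain ⟨V, _, _, _, ρ, _, rfl⟩ := hf.exists_isIrreducible
  have := nontrivial_of_isIrreducible ρ
  obtain ⟨N, hN⟩ := exists_isAtom_subrepresentation (ρ.comp H.subtype)
  have := isIrreducible_toRepresentation_of_isAtom hN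
  have hy' : y⁻¹ ∉ H := mt inv_mem_iff.1 hy
  let N' := translateSubrepresentation y⁻¹ N
  have htop : N.toSubmodule ⊔ N'.toSubmodule = ⊤ :=
    sup_translateSubrepresentation_eq_top hH hy' hN.1
  refine ⟨_, isIrrChar_character N.toRepresentation, ?_⟩
  by_cases hdisj : Disjoint N N'
  · right
    have hN' : N'.toRepresentation.character =
        N.toRepresentation.character ∘ MulAut.conjNormal y := by
      rw [character_translateSubrepresentation, inv_inv]
    rw [← hN']
    refine character_eq_add_of_isCompl (ρ := ρ.comp H.subtype) ⟨?_, ?_⟩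
    · exact disjoint_iff.2 (congrArg Subrepresentation.toSubmodule (disjoint_iff.1 hdisj))
    · exact codisjoint_iff.2 htop
  · left
    have hle : N.toSubmodule ≤ N'.toSubmodule := hN.not_disjoint_iff_le.1 hdisj
    have hNN' : N.toSubmodule = N'.toSubmodule := Submodule.eq_of_le_of_finrank_le hle
      (Submodule.finrank_map_le _ _)
    rw [← hNN', sup_idem] at htop
    exact (character_toRepresentation_of_eq_top htop).symm

lemma IsIrrChar.comp_conjNormal_conjNormal (hH : H.index = 2) {θ : H → ℂ} (hθ : IsIrrChar H θ)
    (y : G) : (θ ∘ MulAut.conjNormal y) ∘ MulAut.conjNormal y = θ := by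
  rw [← comp_conjNormal_mul, hθ.comp_conjNormal_of_mem]
  simp [Subgroup.mul_mem_iff_of_index_two hH]

lemma IsIrrChar.restrict_of_ne_zero [Finite G] (hH : H.index = 2) {f : G → ℂ}
    (hf : IsIrrChar G f) {x : G} (hx : x ∉ H) (hfx : f x ≠ 0) :
    IsIrrChar H (f ∘ (↑)) := by
  have := Fintype.ofFinite G
  have := Fintype.ofFinite H
  obtain ⟨ψ, hψ, hres | hres⟩ := hf.exists_restrict_eq_or_eq_add hH hx
  · rwa [hres]
  -- The nonzero value `f x` lies outside `H`, so too little norm is left for two constituents.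
  · have hlt := dotProduct_star_comp_val_lt (p := (· ∈ H)) hx hfx
    have hle := hψ.two_mul_card_le_dotProduct_star_add (hψ.comp_mulEquiv (MulAut.conjNormal x))
    rw [hf.dotProduct_star_self, ← H.card_mul_index, hH, hres] at hlt
    refine absurd (hle.trans_lt hlt) ?_
    simp [mul_comm]

lemma IsIrrChar.exists_add_comp_conjNormal_eq_nsmul [Finite G] [Fintype H] (hH : H.index = 2)
    {f : G → ℂ} (hf : IsIrrChar G f) {θ : H → ℂ} (hθ : IsIrrChar H θ)
    (hfθ : (f ∘ (↑)) ⬝ᵥ star θ ≠ 0) {y : G} (hy : y ∉ H) :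
    ∃ q : ℕ, θ + θ ∘ MulAut.conjNormal y = q • (f ∘ (↑)) := by
  obtain ⟨ψ, hψ, hres | hres⟩ := hf.exists_restrict_eq_or_eq_add hH hy
  · have hψθ : ψ = θ := by
      by_contra hne
      exact hfθ (hres ▸ hψ.dotProduct_star_eq_zero hθ hne)
    have hinv : θ ∘ MulAut.conjNormal y = θ := by
      rw [← hψθ, ← hres]
      exact funext fun a => hf.apply_conj y a
    exact ⟨2, by rw [hinv, hres, hψθ, two_nsmul]⟩
  · have hψy := hψ.comp_mulEquiv (MulAut.conjNormal y : H ≃* H)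
    have hcases : ψ = θ ∨ ψ ∘ MulAut.conjNormal y = θ := by
      by_contra! hne
      apply hfθ
      rw [hres, add_dotProduct, hψ.dotProduct_star_eq_zero hθ hne.1,
        hψy.dotProduct_star_eq_zero hθ hne.2, add_zero]
    refine ⟨1, ?_⟩
    obtain rfl | rfl := hcases
    · rw [one_nsmul, hres]
    · rw [hψ.comp_conjNormal_conjNormal hH, one_nsmul, hres, add_comm]

lemma IsIrrChar.restrict_mem_span [Finite G] [Fintype H] (hH : H.index = 2) {f : G → ℂ}
    (hf : IsIrrChar G f) :
    f ∘ (↑) ∈ Submodule.span ℤ {θ : H → ℂ | IsIrrChar H θ ∧ (f ∘ (↑)) ⬝ᵥ star θ ≠ 0} := by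
  obtain ⟨y, hy⟩ : ∃ y, y ∉ H := by
    by_contra! h
    simp [(Subgroup.eq_top_iff' H).2 h] at hH
  obtain ⟨ψ, hψ, hres | hres⟩ := hf.exists_restrict_eq_or_eq_add hH hy
  · refine Submodule.subset_span ⟨hres ▸ hψ, ?_⟩
    rw [hres, hψ.dotProduct_star_self]
    simp
  · have hψy := hψ.comp_mulEquiv (MulAut.conjNormal y : H ≃* H)
    rw [hres]
    refine add_mem (Submodule.subset_span ⟨hψ, (hψ.dotProduct_star_add_pos hψy).ne'⟩)
      (Submodule.subset_span ⟨hψy, ?_⟩)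
    rw [add_comm]
    exact (hψy.dotProduct_star_add_pos hψ).ne'

end Clifford

section Coinduction

lemma exists_isIrrChar_restrict_dotProduct_star_ne_zero {G : Type} [Group G] [Finite G]
    {H : Subgroup G} [Fintype H] {U W : Type} [AddCommGroup U] [Module ℂ U]
    [FiniteDimensional ℂ U] [Nontrivial U] [AddCommGroup W] [Module ℂ W] [FiniteDimensional ℂ W]
    {τ : Representation ℂ G U} {σ : Representation ℂ H W}
    (φ : Representation.IntertwiningMap (τ.comp H.subtype) σ)
    (hφ : ∀ u, (∀ g, φ (τ g u) = 0) → u = 0) :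
    ∃ f, IsIrrChar G f ∧ (f ∘ (↑)) ⬝ᵥ star σ.character ≠ 0 := by
  obtain ⟨N, hN⟩ := exists_isAtom_subrepresentation τ
  have := isIrreducible_toRepresentation_of_isAtom hN
  refine ⟨_, isIrrChar_character N.toRepresentation, ?_⟩
  let φN := LinearMap.intertwiningMap_of_isIntertwiningMap (N.toRepresentation.comp H.subtype) σ
    (φ.toLinearMap ∘ₗ N.toSubmodule.subtype) fun h u => φ.isIntertwining _ _ h u
  have hφN : φN ≠ 0 := fun h0 => hN.1 <| by
    refine Subrepresentation.toSubmodule_injective ((Submodule.eq_bot_iff _).2 fun u hu => ?_)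
    exact hφ u fun g => congrArg (· ⟨τ g u, N.apply_mem_toSubmodule g hu⟩) h0
  have hpair := character_dotProduct_star_ne_zero hφN
  exact hpair

variable {k V : Type*} [Field k] [AddCommGroup V] [Module k V]

lemma nontrivial_coindV {G : Type*} [Group G] {H : Subgroup G} [Nontrivial V]
    (σ : Representation k H V) : Nontrivial (Representation.coindV H.subtype σ) := by
  obtain ⟨v, hv⟩ := exists_ne (0 : V)
  let s : G → V := fun g => if hg : g ∈ H then σ ⟨g, hg⟩ v else 0
  have hs : s ∈ Representation.coindV H.subtype σ := by
    intro a g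
    by_cases hg : g ∈ H
    · simp [s, hg, H.mul_mem a.2 hg, ← Module.End.mul_apply, ← map_mul]
      rfl
    · simp [s, hg, H.mul_mem_cancel_left a.2]
  have hs1 : s 1 = v := (dif_pos H.one_mem).trans (congrArg (· v) (map_one σ))
  exact ⟨⟨s, hs⟩, 0, fun h => hv (hs1.symm.trans (congrFun (congrArg Subtype.val h) 1))⟩

/-- Evaluation at `1`, the counit of the adjunction between restriction and coinduction. -/
def coindEval {G K : Type*} [Monoid G] [Monoid K] (φ : K →* G) (σ : Representation k K V) :
    Representation.IntertwiningMap ((Representation.coind φ σ).comp φ) σ where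
  toLinearMap := LinearMap.proj 1 ∘ₗ (Representation.coindV φ σ).subtype
  isIntertwining' g := LinearMap.ext fun s => by
    change s.1 (1 * φ g) = σ g (s.1 1)
    simpa using s.2 g 1

lemma IsIrrChar.exists_restrict_dotProduct_star_ne_zero {G : Type} [Group G] [Finite G]
    {H : Subgroup G} [Fintype H] {θ : H → ℂ} (hθ : IsIrrChar H θ) :
    ∃ f, IsIrrChar G f ∧ (f ∘ (↑)) ⬝ᵥ star θ ≠ 0 := by
  obtain ⟨W, _, _, _, σ, _, rfl⟩ := hθ.exists_isIrreducible
  have := nontrivial_of_isIrreducible σ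
  have := nontrivial_coindV σ
  refine exists_isIrrChar_restrict_dotProduct_star_ne_zero (coindEval H.subtype σ) fun s hs => ?_
  refine Subtype.ext (funext fun g => ?_)
  have hsg : s.1 (1 * g) = 0 := hs g
  simpa using hsg

end Coinduction

section TwoRegular

/-- `twoReg` as a `ℤ`-linear map. -/
noncomputable def twoRegLinear (G : Type*) [Monoid G] : (G → ℂ) →ₗ[ℤ] (G → ℂ) where
  toFun := twoReg
  map_add' f h := by ext g; simp only [twoReg, Pi.add_apply]; split_ifs <;> simp
  map_smul' m f := by ext g; simp only [twoReg, Pi.smul_apply]; split_ifs <;> simp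

lemma twoRegLinear_apply {G : Type*} [Monoid G] (f : G → ℂ) : twoRegLinear G f = twoReg f := rfl

lemma span_twoReg_image {G : Type*} [Monoid G] (X : Set (G → ℂ)) :
    Submodule.span ℤ (twoReg '' X) = (Submodule.span ℤ X).map (twoRegLinear G) :=
  (Submodule.map_span (twoRegLinear G) X).symm

lemma twoReg_comp_val {G : Type*} [Group G] {H : Subgroup G} (f : G → ℂ) :
    twoReg (f ∘ (↑) : H → ℂ) = twoReg f ∘ (↑) := by
  ext a
  simp [twoReg]

lemma eq_zero_of_twoReg_eq_zero_of_mem_span {G : Type*} [Monoid G] {B : Set (G → ℂ)}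
    (hB : LinearIndependent ℤ (fun f : B => twoReg (f : G → ℂ))) {F : G → ℂ}
    (hF : F ∈ Submodule.span ℤ B) (hF0 : twoReg F = 0) : F = 0 := by
  have h : Disjoint (Submodule.span ℤ (Set.range ((↑) : B → G → ℂ)))
      (LinearMap.ker (twoRegLinear G)) := Submodule.range_ker_disjoint hB
  rw [Subtype.range_coe] at h
  exact Submodule.disjoint_def.1 h F hF hF0

lemma linearIndependent_twoReg_of_isIrrChar {G : Type} [Group G] [Finite G] {B : Set (G → ℂ)}
    (hB : B ⊆ {f | IsIrrChar G f})
    (hinj : ∀ F ∈ Submodule.span ℤ B, twoReg F = 0 → F = 0) :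
    LinearIndependent ℤ (fun f : B => twoReg (f : G → ℂ)) := by
  have hBirr : LinearIndependent ℤ ((↑) : B → G → ℂ) :=
    LinearIndependent.restrict_scalars' ℤ ((linearIndependent_isIrrChar G).mono hB)
  refine hBirr.map (f := twoRegLinear G) (Submodule.disjoint_def.2 ?_)
  rw [Subtype.range_coe]
  exact hinj

end TwoRegular

section Constituents

variable {G : Type} [Group G] {H : Subgroup G} {B : Set (G → ℂ)}

/-- The irreducible constituents of the restrictions to `H` of the members of `B`. -/
def restrictionConstituents (H : Subgroup G) [Fintype H] (B : Set (G → ℂ)) : Set (H → ℂ) :=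
  {θ | IsIrrChar H θ ∧ ∃ f ∈ B, (f ∘ (↑)) ⬝ᵥ star θ ≠ 0}

variable [H.Normal]

lemma IsIrrChar.conjNormal_apply_of_commute {θ : H → ℂ} (hθ : IsIrrChar H θ) {y c : G}
    (hyc : y * c ∈ H) {a : H} (hca : Commute c a) : θ (MulAut.conjNormal y a) = θ a := by
  have hfix : MulAut.conjNormal c a = a := by
    ext1
    rw [MulAut.conjNormal_apply, hca.eq, mul_inv_cancel_right]
  conv_rhs => rw [← hθ.comp_conjNormal_of_mem hyc, comp_conjNormal_mul]
  rw [Function.comp_apply, Function.comp_apply, hfix]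

lemma comp_conjNormal_eq_of_twoReg_eq_zero {φ : H → ℂ}
    (hφ : φ ∈ Submodule.span ℤ {θ | IsIrrChar H θ}) (hφ0 : twoReg φ = 0) {y : G}
    (hc : ∀ a : H, ¬ Odd (orderOf a) → ∃ c : G, Commute c a ∧ y * c ∈ H) :
    φ ∘ MulAut.conjNormal y = φ := by
  have hvanish {a : H} (ha : Odd (orderOf a)) : φ a = 0 :=
    (if_pos ha).symm.trans (congrFun hφ0 a)
  ext a
  by_cases ha : Odd (orderOf a)
  · rw [Function.comp_apply, hvanish ha, hvanish]
    rwa [MulEquiv.orderOf_eq]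
  · obtain ⟨c, hca, hyc⟩ := hc a ha
    clear hvanish hφ0
    induction hφ using Submodule.span_induction with
    | mem θ hθ => exact hθ.conjNormal_apply_of_commute hyc hca
    | zero => rfl
    | add φ ψ _ _ hφ hψ => exact congrArg₂ (· + ·) hφ hψ
    | smul m φ _ hφ => exact congrArg (m • ·) hφ

variable [Finite G] [Fintype H]

lemma add_comp_conjNormal_mem_map_span (hH : H.index = 2) (hB : B ⊆ {f | IsIrrChar G f})
    {y : G} (hy : y ∉ H) {φ : H → ℂ} (hφ : φ ∈ Submodule.span ℤ (restrictionConstituents H B)) :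
    φ + φ ∘ MulAut.conjNormal y ∈ (Submodule.span ℤ B).map (LinearMap.funLeft ℤ ℂ (↑)) := by
  let symmetrize : (H → ℂ) →ₗ[ℤ] (H → ℂ) :=
    LinearMap.id + LinearMap.funLeft ℤ ℂ (MulAut.conjNormal y)
  change φ ∈ ((Submodule.span ℤ B).map (LinearMap.funLeft ℤ ℂ ((↑) : H → G))).comap symmetrize
  refine Submodule.span_le.2 ?_ hφ
  rintro θ ⟨hθ, f, hf, hfθ⟩
  obtain ⟨q, hq⟩ := (hB hf).exists_add_comp_conjNormal_eq_nsmul hH hθ hfθ hy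
  exact ⟨q • f, Submodule.smul_of_tower_mem _ q (Submodule.subset_span hf), hq.symm⟩

lemma restrict_twoReg_mem_span_restrictionConstituents (hH : H.index = 2)
    (hB : B ⊆ {f | IsIrrChar G f}) {f : G → ℂ} (hf : twoReg f ∈ Submodule.span ℤ (twoReg '' B)) :
    twoReg (f ∘ (↑)) ∈ Submodule.span ℤ (twoReg '' restrictionConstituents H B) := by
  rw [span_twoReg_image] at hf ⊢
  obtain ⟨F, hF, hFf : twoReg F = twoReg f⟩ := hf
  have hle : (Submodule.span ℤ B).map (LinearMap.funLeft ℤ ℂ ((↑) : H → G)) ≤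
      Submodule.span ℤ (restrictionConstituents H B) := by
    refine (Submodule.map_span_le _ _ _).2 fun ψ hψ => ?_
    refine Submodule.span_mono ?_ ((hB hψ).restrict_mem_span hH)
    exact fun θ hθ => ⟨hθ.1, ψ, hψ, hθ.2⟩
  have hres_eq : twoReg (F ∘ (↑) : H → ℂ) = twoReg (f ∘ (↑)) := by
    rw [twoReg_comp_val, hFf, twoReg_comp_val]
  exact ⟨_, hle ⟨F, hF, rfl⟩, hres_eq⟩

end Constituents

section SignCharacter

variable {G : Type*} [Group G] {ε : G →* ℤˣ}

lemma mem_ker_of_odd_orderOf {g : G} (hg : Odd (orderOf g)) : g ∈ ε.ker := by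
  refine (Int.units_eq_one_or (ε g)).resolve_right fun h => ?_
  have hpow := congrArg ε (pow_orderOf_eq_one g)
  rw [map_pow, h, hg.neg_one_pow, map_one] at hpow
  exact absurd hpow (by decide)

lemma notMem_ker_of_eq_neg_one {y : G} (hy : ε y = -1) : y ∉ ε.ker := by
  rw [MonoidHom.mem_ker, hy]
  decide

lemma index_ker_eq_two {y : G} (hy : ε y = -1) : ε.ker.index = 2 := by
  refine Subgroup.index_eq_two_iff.2 ⟨y, fun b => ?_⟩
  simp only [MonoidHom.mem_ker, map_mul, hy]
  obtain hb | hb := Int.units_eq_one_or (ε b) <;> rw [hb] <;> decide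

lemma exists_eq_neg_one_of_mul_ne {f : G → ℂ} (hf : (fun g => ((ε g : ℤ) : ℂ) * f g) ≠ f) :
    ∃ x, ε x = -1 ∧ f x ≠ 0 := by
  obtain ⟨x, hx⟩ := Function.ne_iff.1 hf
  refine ⟨x, (Int.units_eq_one_or _).resolve_left fun h => hx ?_, fun h => hx ?_⟩ <;> simp [h]

end SignCharacter

section TwoBasicSet

variable {G : Type} [Group G] [Finite G] {ε : G →* ℤˣ} [Fintype ε.ker] {B : Set (G → ℂ)}

lemma eq_zero_of_mem_span_restrictionConstituents
    (hε : ∀ g, ¬ Odd (orderOf g) → ∃ c, Commute c g ∧ ε c = -1) (hB : IsTwoBasicSet G B)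
    {φ : ε.ker → ℂ} (hφ : φ ∈ Submodule.span ℤ (restrictionConstituents ε.ker B))
    (hφ0 : twoReg φ = 0) : φ = 0 := by
  by_cases hodd : ∀ g : G, Odd (orderOf g)
  · refine funext fun a => (if_pos ?_).symm.trans (congrFun hφ0 a)
    rw [← Subgroup.orderOf_coe]
    exact hodd a
  obtain ⟨g, hg⟩ := not_forall.1 hodd
  obtain ⟨y, -, hy⟩ := hε g hg
  have hinv : φ ∘ MulAut.conjNormal y = φ := by
    refine comp_conjNormal_eq_of_twoReg_eq_zero (Submodule.span_mono (fun θ hθ => hθ.1) hφ) hφ0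
      fun a ha => ?_
    obtain ⟨c, hca, hc⟩ := hε a (by rwa [Subgroup.orderOf_coe])
    exact ⟨c, hca, by simp [MonoidHom.mem_ker, hy, hc]⟩
  obtain ⟨F, hF, hFφ⟩ : ∃ F ∈ Submodule.span ℤ B, F ∘ (↑) = φ + φ ∘ MulAut.conjNormal y :=
    add_comp_conjNormal_mem_map_span (index_ker_eq_two hy) hB.1 (notMem_ker_of_eq_neg_one hy) hφ
  have hF0 : twoReg F = 0 := by
    ext g
    by_cases hg : Odd (orderOf g)
    · have hker : twoReg (F ∘ (↑) : ε.ker → ℂ) = 0 := by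
        rw [hFφ, hinv, ← twoRegLinear_apply, map_add, twoRegLinear_apply, hφ0, add_zero]
      exact congrFun ((twoReg_comp_val F).symm.trans hker) ⟨g, mem_ker_of_odd_orderOf hg⟩
    · exact if_neg hg
  have hF_eq := eq_zero_of_twoReg_eq_zero_of_mem_span hB.2.1 hF hF0
  rw [hF_eq, hinv, ← two_nsmul] at hFφ
  exact (smul_eq_zero.1 hFφ.symm).resolve_left two_ne_zero

lemma span_twoReg_restrictionConstituents (hB : IsTwoBasicSet G B)
    (hself : ∀ f, IsIrrChar G f → (fun g => ((ε g : ℤ) : ℂ) * f g) = f → f ∈ B) :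
    Submodule.span ℤ (twoReg '' restrictionConstituents ε.ker B) =
      Submodule.span ℤ (twoReg '' {θ | IsIrrChar ε.ker θ}) := by
  refine le_antisymm (Submodule.span_mono (Set.image_mono fun θ hθ => hθ.1))
    (Submodule.span_le.2 ?_)
  rintro _ ⟨θ, hθ, rfl⟩
  obtain ⟨f, hf, hfθ⟩ := hθ.exists_restrict_dotProduct_star_ne_zero (G := G)
  by_cases hεf : (fun g => ((ε g : ℤ) : ℂ) * f g) = f
  · exact Submodule.subset_span ⟨θ, ⟨hθ, f, hself f hf hεf, hfθ⟩, rfl⟩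
  obtain ⟨x, hx, hfx⟩ := exists_eq_neg_one_of_mul_ne hεf
  have hH := index_ker_eq_two hx
  have hres : f ∘ (↑) = θ := by
    by_contra hne
    have hirr := hf.restrict_of_ne_zero hH (notMem_ker_of_eq_neg_one hx) hfx
    exact hfθ (hirr.dotProduct_star_eq_zero hθ hne)
  rw [← hres]
  refine restrict_twoReg_mem_span_restrictionConstituents hH hB.1 ?_
  rw [hB.2.2]
  exact Submodule.subset_span ⟨f, hf, rfl⟩

theorem restriction_of_twoBasicSet_isTwoBasicSet_general
    (hε : ∀ g, ¬ Odd (orderOf g) → ∃ c, Commute c g ∧ ε c = -1) (hB : IsTwoBasicSet G B)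
    (hself : ∀ f, IsIrrChar G f → (fun g => ((ε g : ℤ) : ℂ) * f g) = f → f ∈ B) :
    IsTwoBasicSet ε.ker (restrictionConstituents ε.ker B) :=
  ⟨fun _ hθ => hθ.1,
    linearIndependent_twoReg_of_isIrrChar (fun _ hθ => hθ.1) fun _ =>
      eq_zero_of_mem_span_restrictionConstituents hε hB,
    span_twoReg_restrictionConstituents hB hself⟩

end TwoBasicSet

lemma exists_commute_sign_eq_neg_one {α : Type*} [Fintype α] [DecidableEq α]
    (g : Equiv.Perm α) (hg : ¬ Odd (orderOf g)) :
    ∃ c, Commute c g ∧ Equiv.Perm.sign c = -1 := by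
  obtain ⟨m, hm, h2⟩ : ∃ m ∈ g.cycleType, 2 ∣ m := by
    refine Nat.prime_two.prime.exists_mem_multiset_dvd ?_
    rw [Nat.not_odd_iff_even, even_iff_two_dvd, ← Equiv.Perm.lcm_cycleType] at hg
    exact hg.trans (Multiset.lcm_dvd.2 fun m hm => Multiset.dvd_prod hm)
  rw [Equiv.Perm.cycleType_def] at hm
  obtain ⟨c, hc, rfl⟩ := Multiset.mem_map.1 hm
  refine ⟨c, Equiv.Perm.self_mem_cycle_factors_commute hc, ?_⟩
  have heven : Even c.support.card := even_iff_two_dvd.2 h2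
  rw [(Equiv.Perm.mem_cycleFactorsFinset_iff.1 hc).1.sign, heven.neg_one_pow]

/-- if B is a 2-basic set of S_n containing every irreducible character χ with
ε ⊗ χ = χ, then its restriction to A_n is a 2-basic set of A_n. -/
theorem restriction_of_twoBasicSet_isTwoBasicSet (n : ℕ) (hn : 0 < n)
    (B : Set (Equiv.Perm (Fin n) → ℂ))
    (hB : IsTwoBasicSet (Equiv.Perm (Fin n)) B)
    (hself : ∀ f : Equiv.Perm (Fin n) → ℂ, IsIrrChar (Equiv.Perm (Fin n)) f →
      (fun g => ((Equiv.Perm.sign g : ℤ) : ℂ) * f g) = f → f ∈ B) :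
    IsTwoBasicSet (alternatingGroup (Fin n)) (restrictionToAlternating n B) :=
  restriction_of_twoBasicSet_isTwoBasicSet_general (ε := Equiv.Perm.sign)
    exists_commute_sign_eq_neg_one hB hself
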